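/- Let α ∈ (0, 3] and let h ∈ F(α). Then there exists a Borel probability measure μ on the unit circle 𝕋 such that h'(z) = exp(−α·∫_𝕋 Log(1 − zζ) dμ(ζ)) for all z ∈ 𝔻, where Log denotes the principal complex logarithm. -/

import Mathlib

open Complex Metric MeasureTheory

/-- Membership in the family `F(α)`. -/
def MemF (α : ℝ) (h : ℂ → ℂ) : Prop :=
  DifferentiableOn ℂ h (ball 0 1) ∧ h 0 = 0 ∧ deriv h 0 = 1 ∧
  (∀ z ∈ ball (0:ℂ) 1, deriv h z ≠ 0) ∧
  (∀ z ∈ ball (0:ℂ) 1, 1 - α / 2 < (1 + z * deriv (deriv h) z / deriv h z).re)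

open scoped ComplexConjugate

/-- A nonnegative continuous density of mean one on the unit circle gives a probability measure
on the circle, whose integrals are the weighted circle averages. -/
theorem exists_probabilityMeasure_integral_eq_circleAverage {u : ℂ → ℝ}
    (hu : ContinuousOn u (sphere 0 1)) (hu0 : ∀ ζ ∈ sphere (0 : ℂ) 1, 0 ≤ u ζ)
    (hu1 : Real.circleAverage u 0 1 = 1) :
    ∃ μ : ProbabilityMeasure (sphere (0 : ℂ) 1), ∀ f : ℂ → ℂ, ContinuousOn f (sphere 0 1) →
      ∫ ζ, f ζ ∂(μ : Measure (sphere (0 : ℂ) 1)) =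
        Real.circleAverage (fun ζ ↦ (u ζ : ℂ) * f ζ) 0 1 := by
  have hmem : ∀ θ : ℝ, circleMap 0 1 θ ∈ sphere (0 : ℂ) 1 := circleMap_mem_sphere 0 zero_le_one
  let e : ℝ → sphere (0 : ℂ) 1 := fun θ ↦ ⟨circleMap 0 1 θ, hmem θ⟩
  have he : Measurable e := by
    refine Continuous.measurable ?_
    exact Continuous.subtype_mk (continuous_circleMap 0 1) _
  have hv : Continuous fun θ : ℝ ↦ (2 * Real.pi)⁻¹ * u (circleMap 0 1 θ) :=
    continuous_const.mul (hu.comp_continuous (continuous_circleMap 0 1) hmem)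
  set v : ℝ → ℝ := fun θ ↦ (2 * Real.pi)⁻¹ * u (circleMap 0 1 θ) with hv_def
  have hv0 : ∀ θ, 0 ≤ v θ := fun θ ↦ mul_nonneg (by positivity) (hu0 _ (hmem θ))
  let ν : Measure ℝ :=
    (volume.restrict (Set.Ioc 0 (2 * Real.pi))).withDensity fun θ ↦ ENNReal.ofReal (v θ)
  have hν : IsProbabilityMeasure ν := by
    constructor
    rw [withDensity_apply _ MeasurableSet.univ, Measure.restrict_univ,
      ← ofReal_integral_eq_lintegral_ofReal (hv.integrableOn_Ioc) (ae_of_all _ hv0),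
      ← intervalIntegral.integral_of_le Real.two_pi_pos.le]
    rw [Real.circleAverage_def, smul_eq_mul] at hu1
    rw [hv_def, intervalIntegral.integral_const_mul, hu1, ENNReal.ofReal_one]
  refine ⟨⟨ν.map e, Measure.isProbabilityMeasure_map he.aemeasurable⟩, fun f hf ↦ ?_⟩
  have hf' : Continuous fun ζ : sphere (0 : ℂ) 1 ↦ f ζ :=
    hf.comp_continuous continuous_subtype_val fun ζ ↦ ζ.2
  rw [ProbabilityMeasure.coe_mk, integral_map he.aemeasurable hf'.aestronglyMeasurable,
    integral_withDensity_eq_integral_toReal_smul hv.measurable.ennreal_ofReal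
      (ae_of_all _ fun _ ↦ ENNReal.ofReal_lt_top),
    ← intervalIntegral.integral_of_le Real.two_pi_pos.le, Real.circleAverage_def,
    ← intervalIntegral.integral_smul]
  refine intervalIntegral.integral_congr fun θ _ ↦ ?_
  change (ENNReal.ofReal (v θ)).toReal • f (circleMap 0 1 θ) = _
  rw [ENNReal.toReal_ofReal (hv0 θ), Complex.real_smul, Complex.real_smul, hv_def]
  push_cast
  ring

theorem one_sub_mul_ne_zero_of_norm_lt_one {w ζ : ℂ} (hw : ‖w‖ < 1) (hζ : ‖ζ‖ ≤ 1) :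
    1 - w * ζ ≠ 0 := by
  intro h
  have h1 : ‖w * ζ‖ = 1 := by rw [← sub_eq_zero.1 h, norm_one]
  rw [norm_mul] at h1
  nlinarith [norm_nonneg w, norm_nonneg ζ]

section CircleAverage

variable {g : ℂ → ℂ} {w : ℂ}

theorem circleAverage_re_one_add_mul (hg : DiffContOnCl ℂ g (ball 0 1)) :
    Real.circleAverage (fun ξ ↦ (1 + ξ * g ξ).re) 0 1 = 1 := by
  have hd : DiffContOnCl ℂ (fun ξ ↦ 1 + ξ * g ξ) (ball 0 |1|) := by
    rw [abs_one]
    exact (differentiable_id.diffContOnCl.smul hg).const_add 1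
  have hc : ContinuousOn (fun ξ ↦ 1 + ξ * g ξ) (sphere 0 |1|) :=
    hd.continuousOn.mono (by
      rw [abs_one, closure_ball _ one_ne_zero]; exact sphere_subset_closedBall)
  have := Complex.reCLM.circleAverage_comp_comm hc.circleIntegrable'
  rw [hd.circleAverage] at this
  simpa [Function.comp_def] using this

/-- A Schwarz-type formula recovering a holomorphic function `g` from the real part of
`1 + ξ * g ξ` on the unit circle. -/
theorem circleAverage_re_one_add_mul_mul_cauchyKernel (hg : DiffContOnCl ℂ g (ball 0 1))
    (hw : w ∈ ball (0 : ℂ) 1) :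
    Real.circleAverage
      (fun ξ ↦ (((1 + ξ * g ξ).re : ℝ) : ℂ) * (ξ⁻¹ / (1 - w * ξ⁻¹))) 0 1 = g w / 2 := by
  have hw' : ‖w‖ < 1 := by simpa using hw
  have hcw : ‖conj w‖ < 1 := by simpa using hw'
  have hsph : closure (ball (0 : ℂ) 1) = closedBall 0 1 := closure_ball _ one_ne_zero
  have hgc : ContinuousOn g (sphere 0 1) :=
    hg.continuousOn.mono (hsph ▸ sphere_subset_closedBall)
  let K : ℂ → ℂ := fun ξ ↦ ξ / (1 - conj w * ξ) * (2 + ξ * g ξ)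
  have hk : DiffContOnCl ℂ (fun ξ ↦ ξ / (1 - conj w * ξ)) (ball 0 1) := by
    refine DifferentiableOn.diffContOnCl ?_
    rw [hsph]
    refine DifferentiableOn.div (by fun_prop) (by fun_prop) fun ξ hξ ↦ ?_
    exact one_sub_mul_ne_zero_of_norm_lt_one hcw (by simpa using hξ)
  have hK : DiffContOnCl ℂ K (ball 0 1) :=
    hk.smul ((differentiable_id.diffContOnCl.smul hg).const_add 2)
  have hKc : ContinuousOn K (sphere 0 1) :=
    hK.continuousOn.mono (hsph ▸ sphere_subset_closedBall)
  have hKi : CircleIntegrable K 0 1 := hKc.circleIntegrable zero_le_one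
  have hKavg : Real.circleAverage (fun ξ ↦ conj (K ξ)) 0 1 = 0 := by
    have h1 := (Complex.conjCLE : ℂ →L[ℝ] ℂ).circleAverage_comp_comm hKi
    have h2 : Real.circleAverage K 0 1 = 0 := by
      rw [DiffContOnCl.circleAverage (by rwa [abs_one])]
      simp [K]
    rw [h2] at h1
    simpa [Function.comp_def] using h1
  have hgavg : Real.circleAverage (fun ξ ↦ (ξ / (ξ - w)) • g ξ) 0 1 = g w := by
    have := DiffContOnCl.circleAverage_smul_div (c := 0) (R := 1) (f := g) (w := w)
      (by rwa [abs_one]) (by rwa [abs_one])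
    simpa using this
  have hsub : ∀ ξ ∈ sphere (0 : ℂ) 1, ξ - w ≠ 0 := by
    intro ξ hξ h
    rw [sub_eq_zero.1 h] at hξ
    exact hw'.ne (by simpa using hξ)
  have hgi : CircleIntegrable (fun ξ ↦ (ξ / (ξ - w)) • g ξ) 0 1 := by
    refine ContinuousOn.circleIntegrable zero_le_one (ContinuousOn.fun_smul ?_ hgc)
    exact ContinuousOn.div (by fun_prop) (by fun_prop) hsub
  have hKi' : CircleIntegrable (fun ξ ↦ conj (K ξ)) 0 1 :=
    (Complex.continuous_conj.comp_continuousOn hKc).circleIntegrable zero_le_one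
  have hsum : Real.circleAverage
      (fun ξ ↦ (1 / 2 : ℝ) • ((ξ / (ξ - w)) • g ξ + conj (K ξ))) 0 1 = g w / 2 := by
    rw [Real.circleAverage_fun_smul, Real.circleAverage_fun_add hgi hKi', hgavg, hKavg]
    simp
    ring
  rw [← hsum]
  refine Real.circleAverage_congr_sphere fun ξ hξ ↦ ?_
  rw [abs_one] at hξ
  have hn : ‖ξ‖ = 1 := by simpa using hξ
  have hξ0 : ξ ≠ 0 := by
    rintro rfl
    simp at hn
  have hinv : conj ξ = ξ⁻¹ := (Complex.inv_eq_conj hn).symm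
  have hk1 : conj (ξ / (1 - conj w * ξ)) = 1 / (ξ - w) := by
    have := one_sub_mul_ne_zero_of_norm_lt_one hw' (ζ := ξ⁻¹) (by simp [hn])
    have := hsub ξ hξ
    simp only [map_div₀, map_sub, map_mul, map_one, Complex.conj_conj, hinv]
    field_simp
  have hk2 : ξ⁻¹ / (1 - w * ξ⁻¹) = 1 / (ξ - w) := by
    have := one_sub_mul_ne_zero_of_norm_lt_one hw' (ζ := ξ⁻¹) (by simp [hn])
    have := hsub ξ hξ
    field_simp
  simp only [K]
  rw [map_mul, hk1, hk2, Complex.re_eq_add_conj, Complex.real_smul]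
  simp only [map_add, map_mul, map_one, map_ofNat, smul_eq_mul]
  push_cast
  ring

end CircleAverage

/-- The Herglotz representation on the unit disk, in terms of the Cauchy kernel: if
`1 + z * g z` has positive real part, then `g / 2` is the Cauchy transform of a probability
measure on the unit circle. -/
theorem exists_probabilityMeasure_cauchyTransform {g : ℂ → ℂ}
    (hg : DifferentiableOn ℂ g (ball 0 1))
    (hpos : ∀ z ∈ ball (0 : ℂ) 1, 0 < (1 + z * g z).re) :
    ∃ μ : ProbabilityMeasure (sphere (0 : ℂ) 1), ∀ z ∈ ball (0 : ℂ) 1,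
      ∫ ζ : sphere (0 : ℂ) 1, (ζ : ℂ) / (1 - z * ζ) ∂(μ : Measure (sphere (0 : ℂ) 1))
        = g z / 2 := by
  have hker : ∀ z ∈ ball (0 : ℂ) 1, ContinuousOn (fun ζ : ℂ ↦ ζ / (1 - z * ζ)) (sphere 0 1) :=
    fun z hz ↦ ContinuousOn.div (by fun_prop) (by fun_prop) fun ζ hζ ↦
      one_sub_mul_ne_zero_of_norm_lt_one (by simpa using hz) (by simpa using hζ.le)
  have hdil : ∀ r ∈ Set.Ioo (0 : ℝ) 1, ∃ μ : ProbabilityMeasure (sphere (0 : ℂ) 1),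
      ∀ z ∈ ball (0 : ℂ) 1,
        ∫ ζ : sphere (0 : ℂ) 1, (ζ : ℂ) / (1 - z * ζ) ∂(μ : Measure (sphere (0 : ℂ) 1))
          = r * g (r * z) / 2 := by
    intro r hr
    have hmaps : Set.MapsTo (fun z : ℂ ↦ r * z) (closedBall 0 1) (ball 0 1) := by
      intro z hz
      have hz' : ‖z‖ ≤ 1 := by simpa using hz
      simp only [mem_ball_zero_iff, norm_mul, Complex.norm_real, Real.norm_of_nonneg hr.1.le]
      nlinarith [hr.1, hr.2]
    have hgr : DiffContOnCl ℂ (fun z ↦ r * g (r * z)) (ball 0 1) := by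
      refine DifferentiableOn.diffContOnCl ?_
      rw [closure_ball _ one_ne_zero]
      exact (hg.comp (by fun_prop) hmaps).const_mul _
    let u : ℂ → ℝ := fun ξ ↦ (1 + ξ * (r * g (r * ξ))).re
    have hu : ContinuousOn u (sphere 0 1) := by
      refine Complex.continuous_re.comp_continuousOn ?_
      refine continuousOn_const.add (continuousOn_id.mul (hgr.continuousOn.mono ?_))
      rw [closure_ball _ one_ne_zero]
      exact sphere_subset_closedBall
    have hinv : Set.MapsTo (fun ζ : ℂ ↦ ζ⁻¹) (sphere 0 1) (sphere 0 1) := by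
      intro ζ hζ
      simpa using hζ
    have hu' : ContinuousOn (fun ζ ↦ u ζ⁻¹) (sphere 0 1) := by
      refine hu.comp (continuousOn_id.inv₀ fun ζ hζ ↦ ?_) hinv
      exact ne_of_mem_sphere hζ one_ne_zero
    have hu0 : ∀ ζ ∈ sphere (0 : ℂ) 1, 0 ≤ u ζ⁻¹ := by
      intro ζ hζ
      have := hpos _ (hmaps (sphere_subset_closedBall (hinv hζ)))
      refine this.le.trans_eq ?_
      simp only [u]
      ring_nf
    obtain ⟨μ, hμ⟩ := exists_probabilityMeasure_integral_eq_circleAverage hu' hu0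
      (Real.circleAverage_zero_one_congr_inv.trans (circleAverage_re_one_add_mul hgr))
    refine ⟨μ, fun z hz ↦ ?_⟩
    rw [hμ _ (hker z hz), ← circleAverage_re_one_add_mul_mul_cauchyKernel hgr hz,
      ← Real.circleAverage_zero_one_congr_inv]
    simp only [u, inv_inv]
  let r : ℕ → ℝ := fun n ↦ 1 - 1 / ((n : ℝ) + 2)
  have hr : ∀ n, r n ∈ Set.Ioo (0 : ℝ) 1 := by
    intro n
    have h2 : (0 : ℝ) < (n : ℝ) + 2 := by positivity
    have h1 : 1 / ((n : ℝ) + 2) < 1 := by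
      rw [div_lt_one h2]
      linarith [(Nat.cast_nonneg n : (0 : ℝ) ≤ n)]
    exact ⟨sub_pos.2 h1, sub_lt_self _ (by positivity)⟩
  have hr1 : Filter.Tendsto r Filter.atTop (nhds 1) := by
    have h1 : Filter.Tendsto (fun n : ℕ ↦ 1 / ((n : ℝ) + 2)) Filter.atTop (nhds 0) :=
      tendsto_const_nhds.div_atTop
        (Filter.tendsto_atTop_add_const_right _ _ tendsto_natCast_atTop_atTop)
    simpa [r] using h1.const_sub 1
  choose μ hμ using fun n ↦ hdil (r n) (hr n)
  obtain ⟨μ₀, -, hμ₀⟩ := isCompact_univ.ultrafilter_le_nhds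
    ((Filter.hyperfilter ℕ).map μ) (by simp)
  have hlim : Filter.Tendsto μ (Filter.hyperfilter ℕ) (nhds μ₀) := hμ₀
  refine ⟨μ₀, fun z hz ↦ ?_⟩
  have hcont : Continuous fun ζ : sphere (0 : ℂ) 1 ↦ (ζ : ℂ) / (1 - z * ζ) :=
    (hker z hz).comp_continuous continuous_subtype_val fun ζ ↦ ζ.2
  have h1 := (ProbabilityMeasure.tendsto_iff_forall_integral_rclike_tendsto ℂ).1 hlim
    (BoundedContinuousFunction.mkOfCompact ⟨_, hcont⟩)
  simp only [BoundedContinuousFunction.mkOfCompact_apply, ContinuousMap.coe_mk, hμ _ z hz] at h1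
  have hr1' : Filter.Tendsto (fun n ↦ (r n : ℂ)) (Filter.hyperfilter ℕ) (nhds 1) := by
    have := (Complex.continuous_ofReal.tendsto 1).comp hr1
    rw [Complex.ofReal_one] at this
    exact this.mono_left Nat.hyperfilter_le_atTop
  have hgz : ContinuousAt g (1 * z) := by
    rw [one_mul]
    exact (hg.differentiableAt (isOpen_ball.mem_nhds hz)).continuousAt
  have h2 := (hr1'.mul (hgz.tendsto.comp (hr1'.mul_const z))).div_const 2
  rw [one_mul, one_mul] at h2
  exact tendsto_nhds_unique h1 h2

theorem hasDerivAt_integral_log_one_sub_mul (μ : Measure (sphere (0 : ℂ) 1)) [IsFiniteMeasure μ]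
    {z : ℂ} (hz : z ∈ ball (0 : ℂ) 1) :
    HasDerivAt (fun z ↦ ∫ ζ : sphere (0 : ℂ) 1, Complex.log (1 - z * ζ) ∂μ)
      (∫ ζ : sphere (0 : ℂ) 1, -(ζ : ℂ) / (1 - z * ζ) ∂μ) z := by
  have hnorm : ∀ ζ : sphere (0 : ℂ) 1, ‖(ζ : ℂ)‖ = 1 := fun ζ ↦ by simp
  have hslit : ∀ x ∈ ball (0 : ℂ) 1, ∀ ζ : sphere (0 : ℂ) 1, 1 - x * ζ ∈ slitPlane := by
    intro x hx ζ
    rw [sub_eq_add_neg]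
    exact mem_slitPlane_of_norm_lt_one (by simpa [hnorm ζ] using hx)
  have hlog : ∀ x ∈ ball (0 : ℂ) 1,
      Continuous fun ζ : sphere (0 : ℂ) 1 ↦ Complex.log (1 - x * ζ) :=
    fun x hx ↦ Continuous.clog (by fun_prop) (hslit x hx)
  have hz' : ‖z‖ < 1 := by simpa using hz
  set ρ : ℝ := (1 + ‖z‖) / 2 with hρ
  have hρ1 : ρ < 1 := by linarith
  have hzρ : ‖z‖ < ρ := by linarith
  have hsub : ball (0 : ℂ) ρ ⊆ ball 0 1 := ball_subset_ball hρ1.le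
  refine (hasDerivAt_integral_of_dominated_loc_of_deriv_le (bound := fun _ ↦ (1 - ρ)⁻¹)
    (F' := fun x (ζ : sphere (0 : ℂ) 1) ↦ -(ζ : ℂ) / (1 - x * ζ))
    (isOpen_ball.mem_nhds (show z ∈ ball 0 ρ by simpa using hzρ)) ?_ ?_ ?_ ?_
    (integrable_const _) ?_).2
  · filter_upwards [isOpen_ball.mem_nhds hz] with x hx
    exact (hlog x hx).aestronglyMeasurable
  · exact (BoundedContinuousFunction.mkOfCompact ⟨_, hlog z hz⟩).integrable μ
  · refine Continuous.aestronglyMeasurable (Continuous.div (by fun_prop) (by fun_prop) ?_)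
    exact fun ζ ↦ slitPlane_ne_zero (hslit z hz ζ)
  · refine ae_of_all _ fun ζ x hx ↦ ?_
    have hx' : ‖x‖ < ρ := by simpa using hx
    rw [norm_div, norm_neg, hnorm, one_div]
    refine inv_anti₀ (by linarith) ?_
    have := norm_sub_norm_le (1 : ℂ) (x * ζ)
    rw [norm_one, norm_mul, hnorm, mul_one] at this
    linarith
  · refine ae_of_all _ fun ζ x hx ↦ ?_
    have h1 : HasDerivAt (fun x : ℂ ↦ 1 - x * ζ) (-(ζ : ℂ)) x := by
      simpa using ((hasDerivAt_id x).mul_const (ζ : ℂ)).const_sub 1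
    exact h1.clog (hslit x (hsub hx) ζ)

theorem stmt3 (α : ℝ) (hα : α ∈ Set.Ioc (0:ℝ) 3) (h : ℂ → ℂ) (hF : MemF α h) :
    ∃ μ : Measure (sphere (0:ℂ) 1), IsProbabilityMeasure μ ∧
      ∀ z ∈ ball (0:ℂ) 1,
        deriv h z = Complex.exp (-(α : ℂ) * ∫ ζ, Complex.log (1 - z * (ζ : ℂ)) ∂μ) := by
  obtain ⟨hd, -, h1, hne, hre⟩ := hF
  have hα0 : 0 < α := hα.1
  have hαc : (α : ℂ) ≠ 0 := by exact_mod_cast hα0.ne'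
  have hd1 : DifferentiableOn ℂ (deriv h) (ball 0 1) := hd.deriv isOpen_ball
  have hd2 : DifferentiableOn ℂ (deriv (deriv h)) (ball 0 1) := hd1.deriv isOpen_ball
  let g : ℂ → ℂ := fun z ↦ ((2 / α : ℝ) : ℂ) * (deriv (deriv h) z / deriv h z)
  have hg : DifferentiableOn ℂ g (ball 0 1) := (hd2.div hd1 hne).const_mul _
  have hpos : ∀ z ∈ ball (0 : ℂ) 1, 0 < (1 + z * g z).re := by
    intro z hz
    have h2 := hre z hz
    have h3 : z * g z = ((2 / α : ℝ) : ℂ) * (z * deriv (deriv h) z / deriv h z) := by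
      simp only [g]
      ring
    rw [h3, add_re, one_re, re_ofReal_mul]
    rw [add_re, one_re] at h2
    have h4 : 2 / α * (-(α / 2)) < 2 / α * (z * deriv (deriv h) z / deriv h z).re :=
      mul_lt_mul_of_pos_left (by linarith) (by positivity)
    have h5 : 2 / α * (-(α / 2)) = -1 := by field_simp
    linarith
  obtain ⟨μ, hμ⟩ := exists_probabilityMeasure_cauchyTransform hg hpos
  refine ⟨μ, inferInstance, ?_⟩
  let J : ℂ → ℂ := fun z ↦ ∫ ζ, Complex.log (1 - z * (ζ : ℂ)) ∂(μ : Measure (sphere (0 : ℂ) 1))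
  let G : ℂ → ℂ := fun z ↦ deriv h z * Complex.exp (α * J z)
  have hG : ∀ z ∈ ball (0 : ℂ) 1, HasDerivAt G 0 z := by
    intro z hz
    have hJ : HasDerivAt J (-(g z / 2)) z := by
      have := hasDerivAt_integral_log_one_sub_mul (μ : Measure (sphere (0 : ℂ) 1)) hz
      simp only [neg_div, integral_neg, hμ z hz] at this
      exact this
    have h2 := (hd1.differentiableAt (isOpen_ball.mem_nhds hz)).hasDerivAt.mul
      (hJ.const_mul (α : ℂ)).cexp
    refine h2.congr_deriv ?_
    have := hne z hz
    simp only [g]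
    push_cast
    field_simp
    ring
  intro z hz
  have hconst : G z = G 0 := by
    refine isOpen_ball.is_const_of_deriv_eq_zero (convex_ball (0 : ℂ) 1).isPreconnected
      (fun x hx ↦ (hG x hx).differentiableAt.differentiableWithinAt)
      (fun x hx ↦ (hG x hx).deriv) hz (mem_ball_self one_pos)
  have hG0 : G 0 = 1 := by simp [G, J, h1]
  rw [neg_mul, Complex.exp_neg]
  exact eq_inv_of_mul_eq_one_left (hconst.trans hG0)
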